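/- Let H be a frustration-free Hamiltonian on a chain of n qudits as in the setup, with spectral gap γ, noncommutation degree g, L layers, and coarse-grained Hamiltonian H̄(t) with spectral gap γ(H̄(t)), for a coarse-graining parameter t with 8L² < t < n/5. If γ ≤ g²/4, then γ(H̄(t)) ≥ t²γ / (400·L²·g² + 3·t²·γ). -/

import Mathlib

open scoped ComplexOrder
open scoped Fin.NatCast

variable {E : Type*} [NormedAddCommGroup E] [InnerProductSpace ℂ E] [FiniteDimensional ℂ E]

/-- An orthogonal projector: a self-adjoint idempotent operator. -/
def IsProjector (P : E →L[ℂ] E) : Prop := IsSelfAdjoint P ∧ P * P = P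

/-- The smallest nonzero (for a positive semidefinite operator, smallest positive)
eigenvalue of an operator. -/
noncomputable def minNonzeroEig (A : E →L[ℂ] E) : ℝ :=
  sInf {c : ℝ | 0 < c ∧ ∃ v : E, v ≠ 0 ∧ A v = (c : ℂ) • v}

/-- The Loewner order: `A ⪯ B` iff `B − A` is positive semidefinite. -/
def Loewner (A B : E →L[ℂ] E) : Prop := (B - A).IsPositive

/-- The contiguous (cyclic) segment of `t` qudits starting at qudit `a` of the chain. -/
def seg {n : ℕ} [NeZero n] (a : Fin n) (t : ℕ) : Finset (Fin n) :=
  (Finset.range t).image (fun k : ℕ => a + (k : Fin n))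

/-- The bond `(i, i+1)` lies inside the region `F`. -/
def bondIn {n : ℕ} [NeZero n] (i : Fin n) (F : Finset (Fin n)) : Prop := i ∈ F ∧ i + 1 ∈ F

instance {n : ℕ} [NeZero n] (F : Finset (Fin n)) : DecidablePred (fun i => bondIn i F) :=
  fun i => inferInstanceAs (Decidable (i ∈ F ∧ i + 1 ∈ F))

/-- A frustration-free nearest-neighbour Hamiltonian `H = Σ_{i=1}^n H_i`,
`H_i = Σ_j P_{ij}`, on a (cyclic) chain of `n` qudits whose joint Hilbert space is `E`:
the `P_{ij}` are orthogonal projectors supported on the qudits `i, i+1`, each failing to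
commute with at most `g` other members of the family, and the family is partitioned into
`L` layers of pairwise commuting projectors. -/
structure ChainSetup (n : ℕ) [NeZero n] (E : Type*) [NormedAddCommGroup E]
    [InnerProductSpace ℂ E] [FiniteDimensional ℂ E] where
  /-- the number of projectors making up the interaction `H_i` on the bond `(i, i+1)` -/
  m : Fin n → ℕ
  /-- the projectors `P_{ij}`, supported on the qudits `i, i+1` -/
  P : (i : Fin n) → Fin (m i) → (E →L[ℂ] E)
  /-- the noncommutation degree -/
  g : ℕ
  /-- the number of layers -/
  L : ℕ
  /-- the assignment of each projector to a layer -/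
  layer : ((i : Fin n) × Fin (m i)) → Fin L
  proj : ∀ i j, IsProjector (P i j)
  /-- operational form of two-body locality: interactions on disjoint bonds commute -/
  locality : ∀ (i i' : Fin n) (j : Fin (m i)) (j' : Fin (m i')),
    Disjoint ({i, i + 1} : Finset (Fin n)) ({i', i' + 1} : Finset (Fin n)) →
    Commute (P i j) (P i' j')
  /-- each projector fails to commute with at most `g` other members of the family -/
  gbound : ∀ p : (i : Fin n) × Fin (m i),
    Nat.card {q : (i : Fin n) × Fin (m i) // q ≠ p ∧ ¬ Commute (P p.1 p.2) (P q.1 q.2)} ≤ g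
  /-- projectors within each layer pairwise commute -/
  layers : ∀ p q : (i : Fin n) × Fin (m i), layer p = layer q →
    Commute (P p.1 p.2) (P q.1 q.2)
  /-- frustration-freeness: there is a nonzero state annihilated by every `P_{ij}` -/
  frustFree : ∃ v : E, v ≠ 0 ∧ ∀ i j, P i j v = 0

namespace ChainSetup

variable {n : ℕ} [NeZero n]

/-- the bond interaction `H_i = Σ_j P_{ij}` -/
noncomputable def Hbond (C : ChainSetup n E) (i : Fin n) : E →L[ℂ] E := ∑ j, C.P i j

/-- the full Hamiltonian `H = Σ_i H_i` -/
noncomputable def Hfull (C : ChainSetup n E) : E →L[ℂ] E := ∑ i, C.Hbond i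

/-- `h_F = Σ_{i : i,i+1 ∈ F} H_i`, the Hamiltonian restricted to the region `F` -/
noncomputable def hamOn (C : ChainSetup n E) (F : Finset (Fin n)) : E →L[ℂ] E :=
  ∑ i ∈ Finset.univ.filter (fun i => bondIn i F), C.Hbond i

/-- the spectral gap `γ` of `H` -/
noncomputable def gap (C : ChainSetup n E) : ℝ := minNonzeroEig C.Hfull

/-- The local gap `γ(t)`: the minimum of the spectral gaps of `h_S` over contiguous
segments `S` of length `t`.  For the open chain (`openBC = true`) only segments that do
not wrap around the end of the chain are allowed. -/
noncomputable def localGap (C : ChainSetup n E) (openBC : Bool) (t : ℕ) : ℝ :=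
  sInf {x : ℝ | ∃ a : Fin n, (openBC = true → (a : ℕ) + t ≤ n) ∧
    x = minNonzeroEig (C.hamOn (seg a t))}

/-- `Q_F`: the orthogonal projector onto the orthogonal complement of the ground space of
`h_F` (for `F = ∅` this is `0`). -/
noncomputable def Qproj (C : ChainSetup n E) (F : Finset (Fin n)) : E →L[ℂ] E :=
  (LinearMap.ker (C.hamOn F : E →ₗ[ℂ] E))ᗮ.subtypeL ∘L
    Submodule.orthogonalProjection (LinearMap.ker (C.hamOn F : E →ₗ[ℂ] E))ᗮ

end ChainSetup

/-- the cyclic successor on `Fin M` -/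
def cyc {M : ℕ} (k : Fin M) : Fin M := ⟨((k : ℕ) + 1) % M, Nat.mod_lt _ k.pos⟩

/-- A coarse-graining configuration with parameter `t` on a chain of `n` qudits:
`⌊n/t⌋` pairwise disjoint contiguous segments `S_k = seg (s k) t` of length `t` in cyclic
order, with `r_k ≤ t/4` qudits between consecutive segments, and pairwise disjoint
contiguous segments `T_k` of length `t` placed between consecutive `S`-segments, each
overlapping `S_k` and `S_{k+1}` in at least `⌊t/4⌋` qudits.  For the open chain, exactly the
last `T`-segment is empty, `S_1` starts at the first qudit and `S_{⌊n/t⌋}` ends at the last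
qudit. -/
structure CoarseGraining (n : ℕ) [NeZero n] (t : ℕ) where
  /-- the number of `S`-segments, `⌊n/t⌋` -/
  M : ℕ
  hM : M = n / t
  hMpos : 0 < M
  /-- the starting points of the `S`-segments -/
  s : Fin M → Fin n
  /-- the numbers `r_k` of qudits sandwiched between consecutive `S`-segments -/
  r : Fin M → ℕ
  hr : ∀ k, 4 * r k ≤ t
  /-- the `S`-segments appear in cyclic order, `S_{k+1}` starting `t + r_k` after `S_k` -/
  hs : ∀ k : Fin M, s (cyc k) = s k + ((t + r k : ℕ) : Fin n)
  hSdisj : ∀ k l : Fin M, k ≠ l → Disjoint (seg (s k) t) (seg (s l) t)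
  /-- the `T`-segments -/
  T : Fin M → Finset (Fin n)
  hT : ∀ k, (∃ a : Fin n, T k = seg a t) ∨ T k = ∅
  hTdisj : ∀ k l : Fin M, k ≠ l → Disjoint (T k) (T l)
  hoverlap₁ : ∀ k, T k ≠ ∅ → t / 4 ≤ ((seg (s k) t) ∩ T k).card
  hoverlap₂ : ∀ k, T k ≠ ∅ → t / 4 ≤ ((seg (s (cyc k)) t) ∩ T k).card
  /-- only the last `T`-segment may be empty (the open-chain case), and in that case
  `S_1` starts at the first qudit and `S_M` ends at the last qudit -/
  hTempty : ∀ k, T k = ∅ → (k : ℕ) = M - 1 ∧ (s ⟨0, hMpos⟩ : ℕ) = 0 ∧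
    (s ⟨M - 1, Nat.sub_lt hMpos one_pos⟩ : ℕ) + t = n

namespace ChainSetup

variable {n : ℕ} [NeZero n]

/-- the coarse-grained Hamiltonian `H̄(t) = Σ_k (Q_{S_k} + Q_{T_k})` -/
noncomputable def coarseHam (C : ChainSetup n E) (t : ℕ) (G : CoarseGraining n t) :
    E →L[ℂ] E :=
  ∑ k, (C.Qproj (seg (G.s k) t) + C.Qproj (G.T k))

/-- the coarse-grained detectability operator
`DL(t) = (∏_k (1 − Q_{S_k}))·(∏_k (1 − Q_{T_k}))` -/
noncomputable def coarseDL (C : ChainSetup n E) (t : ℕ) (G : CoarseGraining n t) :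
    E →L[ℂ] E :=
  ((List.finRange G.M).map (fun k => 1 - C.Qproj (seg (G.s k) t))).prod *
    ((List.finRange G.M).map (fun k => 1 - C.Qproj (G.T k))).prod

/-- the detectability-lemma operator `DL(H) = ∏_{α=1}^L ∏_{(i,j) ∈ T_α} (1 − P_{ij})`,
taken layer by layer -/
noncomputable def DLHam (C : ChainSetup n E) : E →L[ℂ] E :=
  ((List.finRange C.L).map (fun α =>
    (Finset.univ.filter (fun p : (i : Fin n) × Fin (C.m i) => C.layer p = α)).noncommProd
      (fun p => 1 - C.P p.1 p.2)
      (fun p hp q hq _ =>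
        Commute.sub_left (Commute.one_left _)
          (Commute.sub_right (Commute.one_right _)
            (C.layers p q (by
              simp only [Finset.coe_filter, Set.mem_setOf_eq] at hp hq
              rw [hp.2, hq.2])))))).prod

end ChainSetup


/-! ### Part 1: projector basics and the detectability lemma -/

set_option linter.unusedSectionVars false

section Aux

lemma IsProjector.sym {P : E →L[ℂ] E} (h : IsProjector P) (x y : E) :
    inner ℂ (P x) y = inner ℂ x (P y) := by
  have := (ContinuousLinearMap.isSelfAdjoint_iff_isSymmetric.mp h.1) x y
  simpa using this

lemma IsProjector.idem {P : E →L[ℂ] E} (h : IsProjector P) (x : E) : P (P x) = P x := by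
  have := congrArg (fun A : E →L[ℂ] E => A x) h.2
  simpa using this

lemma IsProjector.inner_self {P : E →L[ℂ] E} (h : IsProjector P) (x : E) :
    (inner ℂ x (P x)).re = ‖P x‖ ^ 2 := by
  rw [← h.idem x, ← h.sym, h.idem]
  simpa using (norm_sq_eq_re_inner (𝕜 := ℂ) (P x)).symm

lemma IsProjector.norm_sub_sq {P : E →L[ℂ] E} (h : IsProjector P) (x : E) :
    ‖x - P x‖ ^ 2 = ‖x‖ ^ 2 - ‖P x‖ ^ 2 := by
  rw [_root_.norm_sub_sq (𝕜 := ℂ)]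
  have := h.inner_self x
  simp only [RCLike.re_to_complex]
  rw [this]; ring

lemma IsProjector.norm_le {P : E →L[ℂ] E} (h : IsProjector P) (x : E) : ‖P x‖ ≤ ‖x‖ := by
  have := h.norm_sub_sq x
  have h2 := sq_nonneg ‖x - P x‖
  exact abs_le_of_sq_le_sq' (by linarith) (norm_nonneg _) |>.2

lemma IsProjector.norm_sub_le {P : E →L[ℂ] E} (h : IsProjector P) (x : E) :
    ‖x - P x‖ ≤ ‖x‖ := by
  have := h.norm_sub_sq x
  have h2 := sq_nonneg ‖P x‖
  exact abs_le_of_sq_le_sq' (by linarith) (norm_nonneg _) |>.2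

lemma commute_apply {A B : E →L[ℂ] E} (h : Commute A B) (x : E) : A (B x) = B (A x) := by
  have := congrArg (fun A : E →L[ℂ] E => A x) h.eq
  simpa using this

/-- ordered product of the complementary projectors -/
noncomputable def dl {ι : Type*} (P : ι → E →L[ℂ] E) (l : List ι) : E →L[ℂ] E :=
  (l.map (fun p => 1 - P p)).prod

lemma dl_nil {ι : Type*} (P : ι → E →L[ℂ] E) (v : E) : dl P [] v = v := by simp [dl]

lemma dl_cons {ι : Type*} (P : ι → E →L[ℂ] E) (a : ι) (l : List ι) (v : E) :
    dl P (a :: l) v = dl P l v - P a (dl P l v) := by simp [dl]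

lemma dl_append {ι : Type*} (P : ι → E →L[ℂ] E) (l l' : List ι) (v : E) :
    dl P (l ++ l') v = dl P l (dl P l' v) := by simp [dl]

lemma dl_fix {ι : Type*} (P : ι → E →L[ℂ] E) (l : List ι) (v : E) (h : ∀ p, P p v = 0) :
    dl P l v = v := by
  induction l with
  | nil => simp [dl_nil]
  | cons a l ih => rw [dl_cons, ih, h, sub_zero]

lemma dl_reverse {ι : Type*} (P : ι → E →L[ℂ] E) (hP : ∀ p, IsProjector (P p))
    (l : List ι) (x y : E) :
    inner ℂ (dl P l.reverse x) y = inner ℂ x (dl P l y) := by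
  induction l generalizing x y with
  | nil => simp [dl_nil]
  | cons a l ih =>
    rw [List.reverse_cons, dl_append, ih, dl_cons, dl_cons, dl_nil, inner_sub_left,
      inner_sub_right, (hP a).sym]

open Classical in
lemma dl_main {ι : Type*} (P : ι → E →L[ℂ] E) (hP : ∀ p, IsProjector (P p))
    (l : List ι) (hl : l.Nodup) (v : E) :
    ∃ d : ι → ℝ, (∀ k, 0 ≤ d k) ∧
      ∑ k ∈ l.toFinset, d k ^ 2 = ‖v‖ ^ 2 - ‖dl P l v‖ ^ 2 ∧
      ∀ i, ‖P i (dl P l v)‖ ≤ (if i ∈ l then 0 else ‖P i v‖) +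
        ∑ k ∈ l.toFinset with ¬ Commute (P i) (P k), d k := by
  induction l with
  | nil => exact ⟨fun _ => 0, by simp, by simp [dl_nil], by simp [dl_nil]⟩
  | cons a l ih =>
    obtain ⟨ha, hl'⟩ := List.nodup_cons.mp hl
    obtain ⟨d, hd0, hd1, hd2⟩ := ih hl'
    set w := dl P l v with hw
    have hane : ∀ k ∈ l.toFinset, k ≠ a := by
      rintro k hk rfl; exact ha (by simpa using hk)
    have ha' : a ∉ l.toFinset := by simpa using ha
    refine ⟨Function.update d a ‖P a w‖, ?_, ?_, ?_⟩
    · intro k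
      by_cases hk : k = a
      · subst hk; simp
      · simp [hk, hd0]
    · rw [List.toFinset_cons, Finset.sum_insert ha', dl_cons, (hP a).norm_sub_sq,
        Function.update_self]
      have : ∑ k ∈ l.toFinset, Function.update d a ‖P a w‖ k ^ 2 = ∑ k ∈ l.toFinset, d k ^ 2 :=
        Finset.sum_congr rfl fun k hk => by rw [Function.update_of_ne (hane k hk)]
      rw [this, hd1]; ring
    · intro i
      have hsum : ∑ k ∈ l.toFinset with ¬ Commute (P i) (P k), Function.update d a ‖P a w‖ k
          = ∑ k ∈ l.toFinset with ¬ Commute (P i) (P k), d k :=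
        Finset.sum_congr rfl fun k hk => by
          rw [Function.update_of_ne (hane k (Finset.mem_filter.mp hk).1)]
      have hnn : 0 ≤ ∑ k ∈ l.toFinset with ¬ Commute (P i) (P k), d k :=
        Finset.sum_nonneg fun k _ => hd0 k
      rw [dl_cons, List.toFinset_cons, Finset.filter_insert]
      by_cases hia : i = a
      · subst hia
        rw [map_sub, (hP i).idem, sub_self, norm_zero]
        simp only [List.mem_cons, true_or, if_true, Commute.refl, not_true, if_false, hsum]
        linarith
      · have hmem : (i ∈ a :: l) ↔ i ∈ l := by simp [hia]
        simp only [hmem]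
        by_cases hc : Commute (P i) (P a)
        · simp only [hc, not_true, if_false, hsum]
          rw [map_sub, commute_apply hc]
          exact ((hP a).norm_sub_le _).trans (hd2 i)
        · simp only [hc, not_false_eq_true, if_true]
          rw [Finset.sum_insert (by simp [ha]), hsum, Function.update_self, map_sub]
          have h1 := norm_sub_le (P i w) (P i (P a w))
          have h2 := (hP i).norm_le (P a w)
          have h3 := hd2 i
          linarith

open Classical in
lemma dl_energy {ι : Type*} [Fintype ι] (P : ι → E →L[ℂ] E) (hP : ∀ p, IsProjector (P p))
    (g : ℕ) (hg : ∀ p, (Finset.univ.filter fun q => ¬ Commute (P p) (P q)).card ≤ g)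
    (l : List ι) (hl : l.Nodup) (hall : ∀ p, p ∈ l) (v : E) :
    ∑ i, ‖P i (dl P l v)‖ ^ 2 ≤ (g : ℝ) ^ 2 * (‖v‖ ^ 2 - ‖dl P l v‖ ^ 2) := by
  obtain ⟨d, hd0, hd1, hd2⟩ := dl_main P hP l hl v
  have htf : l.toFinset = Finset.univ := by ext; simp [hall]
  rw [htf] at hd1 hd2
  simp only [hall, if_true, zero_add] at hd2
  calc ∑ i, ‖P i (dl P l v)‖ ^ 2
      ≤ ∑ i, (∑ k with ¬ Commute (P i) (P k), d k) ^ 2 := by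
        gcongr with i _; exact hd2 i
    _ ≤ ∑ i, (g : ℝ) * ∑ k with ¬ Commute (P i) (P k), d k ^ 2 := by
        gcongr with i _
        refine (sq_sum_le_card_mul_sum_sq).trans ?_
        gcongr
        exact hg i
    _ = (g : ℝ) * ∑ k, ∑ i with ¬ Commute (P k) (P i), d k ^ 2 := by
        rw [← Finset.mul_sum]
        simp only [Finset.sum_filter]
        rw [Finset.sum_comm]
        congr 1
        refine Finset.sum_congr rfl fun k _ => Finset.sum_congr rfl fun i _ => ?_
        simp only [Commute.symm_iff (a := P i)]
    _ ≤ (g : ℝ) * ∑ k, (g : ℝ) * d k ^ 2 := by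
        gcongr with k _
        rw [Finset.sum_const, nsmul_eq_mul]
        gcongr
        exact hg k
    _ = _ := by rw [← Finset.mul_sum, hd1]; ring

/-! ### Part 2: Chebyshev polynomials and spectral estimates -/

open Polynomial in
lemma cheb_growth (u : ℝ) (hu : 0 ≤ u) (q : ℕ) :
    1 + (q : ℝ) ^ 2 * u ≤ (Polynomial.Chebyshev.T ℝ (q : ℤ)).eval (1 + u) ∧
    (2 * (q : ℝ) + 1) * u ≤ (Polynomial.Chebyshev.T ℝ ((q : ℤ) + 1)).eval (1 + u) -
      (Polynomial.Chebyshev.T ℝ (q : ℤ)).eval (1 + u) := by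
  induction q with
  | zero => simp
  | succ q ih =>
    obtain ⟨h1, h2⟩ := ih
    have h3 : (Polynomial.Chebyshev.T ℝ (((q + 1 : ℕ) : ℤ) + 1)).eval (1 + u) =
        2 * (1 + u) * (Polynomial.Chebyshev.T ℝ ((q : ℤ) + 1)).eval (1 + u) -
        (Polynomial.Chebyshev.T ℝ (q : ℤ)).eval (1 + u) := by
      have : (((q + 1 : ℕ) : ℤ) + 1) = (q : ℤ) + 2 := by push_cast; ring
      rw [this, Polynomial.Chebyshev.T_add_two]
      simp
    have h4 : ((q + 1 : ℕ) : ℤ) = (q : ℤ) + 1 := by push_cast; ring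
    rw [h3, h4]
    set a := (Polynomial.Chebyshev.T ℝ ((q : ℤ) + 1)).eval (1 + u)
    set b := (Polynomial.Chebyshev.T ℝ (q : ℤ)).eval (1 + u)
    have h5 : 1 + ((q : ℝ) + 1) ^ 2 * u ≤ a := by nlinarith
    have h6 : 1 ≤ a := by
      have : 0 ≤ ((q : ℝ) + 1) ^ 2 * u := by positivity
      linarith
    have h7 : u ≤ u * a := le_mul_of_one_le_right hu h6
    push_cast
    exact ⟨h5, by nlinarith⟩

/-- the polynomial used in the amplification argument -/
lemma cheb_poly (ε : ℝ) (hε : 0 < ε) (q : ℕ) :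
    ∃ p : Polynomial ℝ, p.natDegree ≤ q ∧ p.eval 1 = 1 ∧
      ∀ x, 0 ≤ x → x ≤ 1 / (1 + ε) → |p.eval x| ≤ 1 / (1 + 2 * (q : ℝ) ^ 2 * ε) := by
  set Tq := Polynomial.Chebyshev.T ℝ (q : ℤ) with hTq
  set c := Tq.eval (1 + 2 * ε) with hc
  have hgrow := (cheb_growth (2 * ε) (by positivity) q).1
  have hcpos : 0 < c := lt_of_lt_of_le (by positivity) hgrow
  refine ⟨Polynomial.C c⁻¹ * Tq.comp (Polynomial.C (2 * (1 + ε)) * Polynomial.X - 1), ?_, ?_, ?_⟩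
  · refine (Polynomial.natDegree_C_mul_le _ _).trans ?_
    refine Polynomial.natDegree_comp_le.trans ?_
    have h1 : Tq.natDegree ≤ q := by
      rw [hTq, Polynomial.Chebyshev.natDegree_T]; simp
    have h2 : (Polynomial.C (2 * (1 + ε)) * Polynomial.X - 1 : Polynomial ℝ).natDegree ≤ 1 := by
      compute_degree
    calc _ ≤ q * 1 := Nat.mul_le_mul h1 h2
      _ = q := mul_one q
  · simp only [Polynomial.eval_mul, Polynomial.eval_C, Polynomial.eval_comp, Polynomial.eval_sub,
      Polynomial.eval_X, Polynomial.eval_one]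
    have : 2 * (1 + ε) * 1 - 1 = 1 + 2 * ε := by ring
    rw [this, ← hc, inv_mul_cancel₀ hcpos.ne']
  · intro x hx0 hx1
    simp only [Polynomial.eval_mul, Polynomial.eval_C, Polynomial.eval_comp, Polynomial.eval_sub,
      Polynomial.eval_X, Polynomial.eval_one]
    have hx2 : (1 + ε) * x ≤ 1 := by
      rw [le_div_iff₀ (by positivity)] at hx1; linarith
    have hx3 : 0 ≤ (1 + ε) * x := by positivity
    have hT := Polynomial.Chebyshev.abs_eval_T_real_le_one (q : ℤ)
      (x := 2 * (1 + ε) * x - 1) (by rw [abs_le]; constructor <;> linarith)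
    rw [abs_mul, abs_of_pos (inv_pos.mpr hcpos), one_div]
    have h8 : c⁻¹ ≤ (1 + 2 * (q : ℝ) ^ 2 * ε)⁻¹ := by
      apply inv_anti₀ (by positivity)
      refine le_trans (le_of_eq (by ring)) hgrow
    calc _ ≤ c⁻¹ * 1 := by gcongr
      _ ≤ _ := by rw [mul_one]; exact h8

lemma eig_inner_pow {A : E →L[ℂ] E} (hA : ∀ x y, inner ℂ (A x) y = inner ℂ x (A y))
    {e : E} {r : ℝ} (he : A e = (r : ℂ) • e) (k : ℕ) (v : E) :
    inner ℂ e ((A ^ k) v) = (r : ℂ) ^ k * inner ℂ e v := by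
  induction k with
  | zero => simp
  | succ k ih =>
    rw [pow_succ', mul_apply_eq_comp, ← hA, he, inner_smul_left, ih, pow_succ']
    simp [mul_assoc]

lemma exists_eigbasis (A : E →L[ℂ] E) (hA : ∀ x y, inner ℂ (A x) y = inner ℂ x (A y)) :
    ∃ (N : ℕ) (b : OrthonormalBasis (Fin N) ℂ E) (r : Fin N → ℝ),
      ∀ i, A (b i) = (r i : ℂ) • b i := by
  have hs : (A : E →ₗ[ℂ] E).IsSymmetric := fun x y => hA x y
  exact ⟨_, hs.eigenvectorBasis rfl, hs.eigenvalues rfl, fun i => hs.apply_eigenvectorBasis rfl i⟩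

lemma spec_poly (A : E →L[ℂ] E) (hA : ∀ x y, inner ℂ (A x) y = inner ℂ x (A y))
    (K : Submodule ℂ E) (hK : ∀ x ∈ K, A x = x) (c : ℝ) (hc1 : c < 1)
    (h0 : ∀ v, 0 ≤ (inner ℂ v (A v)).re)
    (hc : ∀ v, (∀ u ∈ K, inner ℂ u v = 0) → (inner ℂ v (A v)).re ≤ c * ‖v‖ ^ 2)
    (p : Polynomial ℝ) (q : ℕ) (hp : p.natDegree ≤ q) (δ : ℝ) (hδ : 0 ≤ δ)
    (hpd : ∀ x, 0 ≤ x → x ≤ c → |p.eval x| ≤ δ)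
    (v : E) (hv : ∀ u ∈ K, inner ℂ u v = 0) :
    ‖∑ k ∈ Finset.range (q + 1), (p.coeff k : ℂ) • (A ^ k) v‖ ≤ δ * ‖v‖ := by
  obtain ⟨N, b, r, hb⟩ := exists_eigbasis A hA
  set y := ∑ k ∈ Finset.range (q + 1), (p.coeff k : ℂ) • (A ^ k) v with hy
  have hnorm : ∀ i, ‖b i‖ = 1 := fun i => b.orthonormal.1 i
  have hri : ∀ (e : E) (s : ℝ), A e = (s : ℂ) • e → (inner ℂ e (A e)).re = s * ‖e‖ ^ 2 := by
    intro e s he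
    rw [he, inner_smul_right, Complex.re_ofReal_mul]
    congr 1
    exact inner_self_eq_norm_sq (𝕜 := ℂ) e
  have hcomp : ∀ i, ‖inner ℂ (b i) y‖ ≤ δ * ‖inner ℂ (b i) v‖ := by
    intro i
    have e1 : inner ℂ (b i) y = ((p.eval (r i) : ℝ) : ℂ) * inner ℂ (b i) v := by
      rw [hy, inner_sum, Polynomial.eval_eq_sum_range' (Nat.lt_succ_of_le hp)]
      simp only [Complex.ofReal_sum, Complex.ofReal_mul, Complex.ofReal_pow]
      rw [Finset.sum_mul]
      refine Finset.sum_congr rfl fun k _ => ?_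
      rw [inner_smul_right, eig_inner_pow hA (hb i)]
      ring
    by_cases hz : inner ℂ (b i) v = 0
    · rw [e1, hz]; simp
    have hr0 : 0 ≤ r i := by
      have := h0 (b i)
      rw [hri _ _ (hb i), hnorm] at this
      linarith
    have hr1 : r i ≠ 1 := by
      intro h1
      apply hz
      set h := b i - K.starProjection (b i) with hh
      have hAh : A h = ((1 : ℝ) : ℂ) • h := by
        rw [hh, map_sub, hb i, h1, hK _ (K.starProjection_apply_mem _)]; simp
      have hperp : ∀ u ∈ K, inner ℂ u h = 0 := fun u hu =>
        (K.sub_starProjection_mem_orthogonal (b i)) u hu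
      have := hc h hperp
      rw [hri _ _ hAh] at this
      have h2 : ‖h‖ ^ 2 = 0 := by nlinarith [sq_nonneg ‖h‖]
      have h3 : h = 0 := by simpa using h2
      have h4 : b i ∈ K := by
        rw [sub_eq_zero.mp h3]; exact K.starProjection_apply_mem _
      exact hv _ h4
    have hrc : r i ≤ c := by
      have hperp : ∀ u ∈ K, inner ℂ u (b i) = 0 := by
        intro u hu
        have h1 := hA u (b i)
        rw [hK u hu, hb i, inner_smul_right] at h1
        have h2 : ((r i : ℂ) - 1) * inner ℂ u (b i) = 0 := by rw [sub_mul, ← h1]; ring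
        rcases mul_eq_zero.mp h2 with h3 | h3
        · exfalso; apply hr1
          have := sub_eq_zero.mp h3
          exact_mod_cast this
        · exact h3
      have := hc _ hperp
      rw [hri _ _ (hb i), hnorm] at this
      linarith
    rw [e1, norm_mul, Complex.norm_real]
    exact mul_le_mul_of_nonneg_right (hpd _ hr0 hrc) (norm_nonneg _)
  have hsq : ‖y‖ ^ 2 ≤ (δ * ‖v‖) ^ 2 := by
    rw [mul_pow, ← b.sum_sq_norm_inner_right y, ← b.sum_sq_norm_inner_right v, Finset.mul_sum]
    refine Finset.sum_le_sum fun i _ => ?_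
    rw [← mul_pow]
    exact pow_le_pow_left₀ (norm_nonneg _) (hcomp i) 2
  exact (abs_le_of_sq_le_sq' hsq (by positivity)).2

lemma inner_eig_sum (A : E →L[ℂ] E) {N : ℕ} (b : OrthonormalBasis (Fin N) ℂ E) (r : Fin N → ℝ)
    (hA : ∀ x y, inner ℂ (A x) y = inner ℂ x (A y))
    (hb : ∀ i, A (b i) = (r i : ℂ) • b i) (v : E) :
    (inner ℂ v (A v)).re = ∑ i, r i * ‖inner ℂ (b i) v‖ ^ 2 := by
  rw [← b.sum_inner_mul_inner v (A v), Complex.re_sum]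
  refine Finset.sum_congr rfl fun i _ => ?_
  rw [← hA, hb, inner_smul_left]
  simp only [Complex.conj_ofReal]
  rw [mul_left_comm, ← inner_conj_symm v (b i), ← Complex.normSq_eq_conj_mul_self,
    Complex.normSq_eq_norm_sq]
  norm_cast

lemma minNonzeroEig_nonneg (A : E →L[ℂ] E) : 0 ≤ minNonzeroEig A :=
  Real.sInf_nonneg fun _ hx => hx.1.le

lemma gap_le_inner (A : E →L[ℂ] E) (hA : ∀ x y, inner ℂ (A x) y = inner ℂ x (A y))
    (h0 : ∀ v, 0 ≤ (inner ℂ v (A v)).re)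
    (v : E) (hv : ∀ u, A u = 0 → inner ℂ u v = 0) :
    minNonzeroEig A * ‖v‖ ^ 2 ≤ (inner ℂ v (A v)).re := by
  obtain ⟨N, b, r, hb⟩ := exists_eigbasis A hA
  rw [inner_eig_sum A b r hA hb, ← b.sum_sq_norm_inner_right v, Finset.mul_sum]
  refine Finset.sum_le_sum fun i _ => ?_
  have hne : b i ≠ 0 := b.orthonormal.ne_zero i
  have hr0 : 0 ≤ r i := by
    have := h0 (b i)
    rw [hb i, inner_smul_right, inner_self_eq_norm_sq_to_K, b.orthonormal.1 i] at this
    simpa using this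
  rcases hr0.eq_or_lt with h | h
  · rw [hv (b i) (by rw [hb, ← h]; simp)]; simp
  · refine mul_le_mul_of_nonneg_right ?_ (by positivity)
    exact csInf_le ⟨0, fun x hx => hx.1.le⟩ ⟨h, b i, hne, hb i⟩

lemma exists_pos_eig (A : E →L[ℂ] E) (hA : ∀ x y, inner ℂ (A x) y = inner ℂ x (A y))
    (v : E) (hv : 0 < (inner ℂ v (A v)).re) :
    {c : ℝ | 0 < c ∧ ∃ v : E, v ≠ 0 ∧ A v = (c : ℂ) • v}.Nonempty := by
  obtain ⟨N, b, r, hb⟩ := exists_eigbasis A hA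
  by_contra hcon
  have hr : ∀ i, r i ≤ 0 := fun i => by
    by_contra hi
    exact hcon ⟨r i, not_le.mp hi, b i, b.orthonormal.ne_zero i, hb i⟩
  rw [inner_eig_sum A b r hA hb] at hv
  have : ∑ i, r i * ‖inner ℂ (b i) v‖ ^ 2 ≤ 0 :=
    Finset.sum_nonpos fun i _ => mul_nonpos_of_nonpos_of_nonneg (hr i) (by positivity)
  linarith

/-! ### Part 3: commuting projectors -/

lemma commuting_projectors {κ : Type*} (Q : κ → E →L[ℂ] E) (hQ : ∀ k, IsProjector (Q k))
    (hcomm : ∀ k l, Commute (Q k) (Q l)) (l : List κ) (v : E) :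
    ‖v‖ ^ 2 - ‖dl Q l v‖ ^ 2 ≤ (l.map fun k => ‖Q k v‖ ^ 2).sum ∧
    (∀ k ∈ l, Q k (dl Q l v) = 0) ∧
    (∀ u, (∀ k ∈ l, Q k u = 0) → inner ℂ u (dl Q l v) = inner ℂ u v) ∧
    (∀ k, ‖Q k (dl Q l v)‖ ≤ ‖Q k v‖) := by
  induction l with
  | nil => simp [dl_nil]
  | cons a l ih =>
    obtain ⟨h1, h2, h3, h4⟩ := ih
    rw [dl_cons]
    refine ⟨?_, ?_, ?_, ?_⟩
    · rw [(hQ a).norm_sub_sq, List.map_cons, List.sum_cons]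
      have := pow_le_pow_left₀ (norm_nonneg _) (h4 a) 2
      linarith
    · intro k hk
      rw [map_sub, commute_apply (hcomm k a)]
      rcases List.mem_cons.mp hk with rfl | hk
      · rw [(hQ k).idem, sub_self]
      · rw [h2 k hk]; simp
    · intro u hu
      rw [inner_sub_right, ← (hQ a).sym, hu a (by simp), inner_zero_left, sub_zero]
      exact h3 u fun k hk => hu k (by simp [hk])
    · intro k
      rw [map_sub, commute_apply (hcomm k a)]
      exact ((hQ a).norm_sub_le _).trans (h4 k)

lemma two_layer (v x y : E) (δ : ℝ) (hx : inner ℂ x v = ((‖x‖ ^ 2 : ℝ) : ℂ))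
    (hy : inner ℂ y v = ((‖y‖ ^ 2 : ℝ) : ℂ)) (hδ : 0 ≤ δ)
    (hxy : ‖(inner ℂ x y : ℂ)‖ ≤ δ * (‖x‖ * ‖y‖)) :
    ‖x‖ ^ 2 + ‖y‖ ^ 2 ≤ (1 + δ) * ‖v‖ ^ 2 := by
  set s := ‖x‖ ^ 2 + ‖y‖ ^ 2 with hs
  have hs0 : 0 ≤ s := by positivity
  have h1 : s ≤ ‖x + y‖ * ‖v‖ := by
    have : inner ℂ (x + y) v = ((s : ℝ) : ℂ) := by
      rw [inner_add_left, hx, hy, hs]; push_cast; ring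
    have h2 := norm_inner_le_norm (𝕜 := ℂ) (x + y) v
    rw [this, Complex.norm_real, Real.norm_of_nonneg hs0] at h2
    exact h2
  have h2 : ‖x + y‖ ^ 2 ≤ (1 + δ) * s := by
    rw [norm_add_sq (𝕜 := ℂ)]
    have h3 : RCLike.re (inner ℂ x y) ≤ ‖(inner ℂ x y : ℂ)‖ := RCLike.re_le_norm _
    have h4 : 2 * (‖x‖ * ‖y‖) ≤ s := by nlinarith [sq_nonneg (‖x‖ - ‖y‖)]
    have h5 : 2 * (δ * (‖x‖ * ‖y‖)) ≤ δ * s := by nlinarith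
    nlinarith
  by_cases hsz : s = 0
  · rw [hsz]; positivity
  have hspos : 0 < s := lt_of_le_of_ne hs0 (Ne.symm hsz)
  have h6 : s ^ 2 ≤ (1 + δ) * s * ‖v‖ ^ 2 := by
    calc s ^ 2 ≤ (‖x + y‖ * ‖v‖) ^ 2 := pow_le_pow_left₀ hs0 h1 2
      _ = ‖x + y‖ ^ 2 * ‖v‖ ^ 2 := by ring
      _ ≤ _ := by gcongr
  nlinarith

lemma ker_proj_commute (A B : E →L[ℂ] E) (hB : ∀ x y, inner ℂ (B x) y = inner ℂ x (B y))
    (hAB : Commute A B) :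
    Commute (LinearMap.ker (A : E →ₗ[ℂ] E))ᗮ.starProjection B := by
  set U := LinearMap.ker (A : E →ₗ[ℂ] E) with hU
  have memU : ∀ x, x ∈ U ↔ A x = 0 := fun x => by rw [hU]; simp
  have hinv : ∀ x ∈ U, B x ∈ U := fun x hx => by
    rw [memU] at *; rw [commute_apply hAB, hx, map_zero]
  have hinv' : ∀ x ∈ Uᗮ, B x ∈ Uᗮ := fun x hx u hu => by
    rw [← hB]; exact hx _ (hinv u hu)
  ext x
  change Uᗮ.starProjection (B x) = B (Uᗮ.starProjection x)
  apply Submodule.eq_starProjection_of_mem_orthogonal (hinv' _ (Uᗮ.starProjection_apply_mem x))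
  rw [← map_sub]
  have : x - Uᗮ.starProjection x ∈ U := by
    have := Uᗮ.sub_starProjection_mem_orthogonal x
    rwa [Submodule.orthogonal_orthogonal] at this
  exact Submodule.le_orthogonal_orthogonal U (hinv _ this)

/-! ### Part 4: absorption (light-cone) argument -/

section Absorb

variable {ι Λ : Type*} (P : ι → E →L[ℂ] E) (layer : ι → Λ) (B : ℕ → ι → Prop)
  (KS : E → Prop) (w : E)

/-- invariant of the absorption argument -/
def AbsInv (d : ℕ) (ψ : E) : Prop :=
  (∀ p, B d p → P p ψ = 0) ∧ ∀ u, KS u → inner ℂ u ψ = inner ℂ u w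

lemma absorb_layer (hP : ∀ p, IsProjector (P p))
    (hmono : ∀ d p, B (d + 1) p → B d p)
    (hB : ∀ d p p', B (d + 1) p → ¬ B d p' → Commute (P p) (P p'))
    (hlay : ∀ p q, layer p = layer q → Commute (P p) (P q))
    (d : ℕ) (hS : ∀ p, ¬ B d p → ∀ u, KS u → P p u = 0)
    (ψ : E) (hψ : AbsInv P B KS w d ψ) (α : Λ) (l : List ι) (hl : ∀ a ∈ l, layer a = α) :
    AbsInv P B KS w (d + 1) (dl P l ψ) := by
  suffices h : (∀ p, B (d + 1) p → P p (dl P l ψ) = 0) ∧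
      (∀ p, B d p → layer p = α → P p (dl P l ψ) = 0) ∧
      ∀ u, KS u → inner ℂ u (dl P l ψ) = inner ℂ u w from ⟨h.1, h.2.2⟩
  induction l with
  | nil =>
    simp only [dl_nil]
    exact ⟨fun p hp => hψ.1 p (hmono d p hp), fun p hp _ => hψ.1 p hp, hψ.2⟩
  | cons a l ih =>
    obtain ⟨h1, h2, h3⟩ := ih fun b hb => hl b (by simp [hb])
    have hla : layer a = α := hl a (by simp)
    rw [dl_cons]
    by_cases ha : B d a
    · rw [h2 a ha hla, sub_zero]
      exact ⟨h1, h2, h3⟩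
    · refine ⟨fun p hp => ?_, fun p hp hpl => ?_, fun u hu => ?_⟩
      · rw [map_sub, commute_apply (hB d p a hp ha), h1 p hp]; simp
      · rw [map_sub, commute_apply (hlay p a (hpl.trans hla.symm)), h2 p hp hpl]; simp
      · rw [inner_sub_right, ← (hP a).sym, hS a ha u hu, inner_zero_left, sub_zero, h3 u hu]

lemma absorb_layers (hP : ∀ p, IsProjector (P p))
    (hmono : ∀ d p, B (d + 1) p → B d p)
    (hB : ∀ d p p', B (d + 1) p → ¬ B d p' → Commute (P p) (P p'))
    (hlay : ∀ p q, layer p = layer q → Commute (P p) (P q))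
    (m : ℕ) (hS : ∀ d < m, ∀ p, ¬ B d p → ∀ u, KS u → P p u = 0)
    (LL : List (List ι)) (hLL : ∀ l ∈ LL, ∃ α, ∀ a ∈ l, layer a = α)
    (d : ℕ) (hd : d + LL.length ≤ m) (ψ : E) (hψ : AbsInv P B KS w d ψ) :
    AbsInv P B KS w (d + LL.length) (dl P LL.flatten ψ) := by
  induction LL with
  | nil => simpa [dl_nil] using hψ
  | cons l LL ih =>
    rw [List.length_cons] at hd ⊢
    have h1 := ih (fun l' hl' => hLL l' (by simp [hl'])) (by omega)
    obtain ⟨α, hα⟩ := hLL l (by simp)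
    rw [List.flatten_cons, dl_append, ← add_assoc]
    exact absorb_layer P layer B KS w hP hmono hB hlay _ (hS _ (by omega)) _ h1 α l hα

lemma absorb_pow (hP : ∀ p, IsProjector (P p))
    (hmono : ∀ d p, B (d + 1) p → B d p)
    (hB : ∀ d p p', B (d + 1) p → ¬ B d p' → Commute (P p) (P p'))
    (hlay : ∀ p q, layer p = layer q → Commute (P p) (P q))
    (m : ℕ) (hS : ∀ d < m, ∀ p, ¬ B d p → ∀ u, KS u → P p u = 0)
    (LL : List (List ι)) (hLL : ∀ l ∈ LL, ∃ α, ∀ a ∈ l, layer a = α)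
    (k : ℕ) (hk : 2 * LL.length * k ≤ m) (hw : ∀ p, B 0 p → P p w = 0) :
    AbsInv P B KS w (2 * LL.length * k)
      (((dl P LL.flatten.reverse * dl P LL.flatten) ^ k) w) := by
  induction k with
  | zero => simpa using ⟨hw, fun u _ => rfl⟩
  | succ k ih =>
    have e : 2 * LL.length * (k + 1) = 2 * LL.length * k + LL.length + LL.length := by ring
    rw [e] at hk ⊢
    have h1 := ih (by omega)
    have h2 := absorb_layers P layer B KS w hP hmono hB hlay m hS LL hLL _ (by omega) _ h1
    have h3 := absorb_layers P layer B KS w hP hmono hB hlay m hS (LL.map List.reverse).reverse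
      (by
        intro l hl
        simp only [List.mem_reverse, List.mem_map] at hl
        obtain ⟨l', hl', rfl⟩ := hl
        obtain ⟨α, hα⟩ := hLL l' hl'
        exact ⟨α, fun a ha => hα a (by simpa using ha)⟩) _ (by simp; omega) _ h2
    rw [← List.reverse_flatten] at h3
    simp only [List.length_reverse, List.length_map] at h3
    rw [pow_succ', mul_apply_eq_comp, mul_apply_eq_comp]
    exact h3

end Absorb

/-! ### Part 5: geometry of the coarse graining -/

section Geometry

variable {n : ℕ} [NeZero n]

lemma natCast_cases {z w : ℕ} (hz : z < n) (hw : w < 2 * n) (h : (z : Fin n) = (w : Fin n)) :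
    z = w ∨ z + n = w := by
  have h1 := congrArg Fin.val h
  rw [Fin.val_natCast, Fin.val_natCast, Nat.mod_eq_of_lt hz] at h1
  by_cases hwn : w < n
  · rw [Nat.mod_eq_of_lt hwn] at h1; exact Or.inl h1
  · rw [Nat.mod_eq_sub_mod (by omega), Nat.mod_eq_of_lt (by omega)] at h1
    right; omega

lemma seg_core (s a : Fin n) (t r m : ℕ) (ht : 5 * t < n) (hr : 4 * r ≤ t) (hm : 0 < m)
    (h1 : m ≤ (seg s t ∩ seg a t).card)
    (h2 : m ≤ (seg (s + ((t + r : ℕ) : Fin n)) t ∩ seg a t).card)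
    (j : ℕ) (hj1 : t ≤ j + m) (hj2 : j < t + r + m) : s + (j : Fin n) ∈ seg a t := by
  obtain ⟨x, hxn, rfl⟩ : ∃ x : ℕ, x < n ∧ a = s + (x : Fin n) :=
    ⟨(a - s).val, (a - s).isLt, by simp⟩
  have memT : ∀ z, z < n → (s + (z : Fin n)) ∈ seg (s + (x : Fin n)) t →
      ∃ y < t, z = x + y ∨ z + n = x + y := by
    intro z hz h
    simp only [seg, Finset.mem_image, Finset.mem_range] at h
    obtain ⟨y, hy, he⟩ := h
    rw [add_assoc] at he
    have he := add_left_cancel he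
    refine ⟨y, hy, natCast_cases hz (by omega) ?_⟩
    rw [← he]; push_cast; rfl
  have memS : ∀ v ∈ seg s t, ∃ z < t, v = s + (z : Fin n) := by
    intro v hv
    simp only [seg, Finset.mem_image, Finset.mem_range] at hv
    obtain ⟨z, hz, rfl⟩ := hv
    exact ⟨z, hz, rfl⟩
  have memS' : ∀ v ∈ seg (s + ((t + r : ℕ) : Fin n)) t,
      ∃ z, t + r ≤ z ∧ z < 2 * t + r ∧ v = s + (z : Fin n) := by
    intro v hv
    simp only [seg, Finset.mem_image, Finset.mem_range] at hv
    obtain ⟨z, hz, rfl⟩ := hv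
    refine ⟨t + r + z, by omega, by omega, ?_⟩
    push_cast; rw [add_assoc s]
  obtain ⟨v, hv⟩ := Finset.card_pos.mp (lt_of_lt_of_le hm h1)
  obtain ⟨v', hv'⟩ := Finset.card_pos.mp (lt_of_lt_of_le hm h2)
  rw [Finset.mem_inter] at hv hv'
  have hxt : x < t := by
    obtain ⟨z, hz, rfl⟩ := memS v hv.1
    obtain ⟨z', hz1, hz2, rfl⟩ := memS' v' hv'.1
    obtain ⟨y, hy, hyz⟩ := memT z (by omega) hv.2
    obtain ⟨y', hy', hyz'⟩ := memT z' (by omega) hv'.2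
    omega
  have c1 : m ≤ t - x := by
    refine h1.trans ?_
    have : seg s t ∩ seg (s + (x : Fin n)) t ⊆
        (Finset.Ico x t).image (fun z : ℕ => s + (z : Fin n)) := by
      intro u hu
      rw [Finset.mem_inter] at hu
      obtain ⟨z, hz, rfl⟩ := memS u hu.1
      obtain ⟨y, hy, hyz⟩ := memT z (by omega) hu.2
      exact Finset.mem_image_of_mem _ (Finset.mem_Ico.mpr (by omega))
    refine (Finset.card_le_card this).trans (Finset.card_image_le.trans ?_)
    simp
  have c2 : m ≤ x + t - (t + r) := by
    refine h2.trans ?_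
    have : seg (s + ((t + r : ℕ) : Fin n)) t ∩ seg (s + (x : Fin n)) t ⊆
        (Finset.Ico (t + r) (x + t)).image (fun z : ℕ => s + (z : Fin n)) := by
      intro u hu
      rw [Finset.mem_inter] at hu
      obtain ⟨z, hz, hz', rfl⟩ := memS' u hu.1
      obtain ⟨y, hy, hyz⟩ := memT z (by omega) hu.2
      exact Finset.mem_image_of_mem _ (Finset.mem_Ico.mpr (by omega))
    refine (Finset.card_le_card this).trans (Finset.card_image_le.trans ?_)
    simp
  simp only [seg, Finset.mem_image, Finset.mem_range]
  refine ⟨j - x, by omega, ?_⟩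
  rw [add_assoc, ← Nat.cast_add]
  congr 2; omega

/-- bonds at depth at least `d` in the `T`-regions -/
def deep {t : ℕ} (G : CoarseGraining n t) : ℕ → Fin n → Prop
  | 0, i => ∃ k, bondIn i (G.T k)
  | d + 1, i => deep G d i ∧ deep G d (i + 1) ∧ deep G d (i - 1)

lemma deep_disjoint {t : ℕ} (G : CoarseGraining n t) (d : ℕ) (i i' : Fin n)
    (h : deep G (d + 1) i) (h' : ¬ deep G d i') :
    Disjoint ({i, i + 1} : Finset (Fin n)) ({i', i' + 1} : Finset (Fin n)) := by
  obtain ⟨h0, h1, h2⟩ := h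
  have n0 : i ≠ i' := by rintro rfl; exact h' h0
  have n1 : i + 1 ≠ i' := by rintro rfl; exact h' h1
  have n2 : i ≠ i' + 1 := by rintro rfl; rw [add_sub_cancel_right] at h2; exact h' h2
  simp [n1.symm, n2.symm, n0.symm]

lemma cover {t : ℕ} (G : CoarseGraining n t) (ht : 0 < t) (i : Fin n) :
    ∃ k, ∃ j : ℕ, j < t + G.r k ∧ i = G.s k + (j : Fin n) := by
  have key : ∀ x : ℕ, ∃ k, ∃ j : ℕ, j < t + G.r k ∧
      G.s ⟨0, G.hMpos⟩ + (x : Fin n) = G.s k + (j : Fin n) := by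
    intro x
    induction x with
    | zero => exact ⟨⟨0, G.hMpos⟩, 0, by omega, rfl⟩
    | succ x ih =>
      obtain ⟨k, j, hj, he⟩ := ih
      by_cases hlt : j + 1 < t + G.r k
      · refine ⟨k, j + 1, hlt, ?_⟩
        rw [Nat.cast_succ, ← add_assoc, he, Nat.cast_succ, add_assoc]
      · refine ⟨cyc k, 0, by omega, ?_⟩
        rw [Nat.cast_succ, ← add_assoc, he, G.hs k, add_assoc, ← Nat.cast_succ,
          show j.succ = t + G.r k by omega]
        simp
  obtain ⟨k, j, hj, he⟩ := key (i - G.s ⟨0, G.hMpos⟩).val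
  exact ⟨k, j, hj, by rw [← he]; simp⟩

lemma deep_of_range {t : ℕ} (G : CoarseGraining n t) (ht : 5 * t < n) (k : Fin G.M)
    (hne : G.T k ≠ ∅) (hm : 0 < t / 4) (d : ℕ) (j : ℕ) (h1 : t + d ≤ j + t / 4)
    (h2 : j + 1 + d < t + G.r k + t / 4) : deep G d (G.s k + (j : Fin n)) := by
  induction d generalizing j with
  | zero =>
    refine ⟨k, ?_⟩
    obtain ⟨a, ha⟩ := (G.hT k).resolve_right hne
    have o1 := G.hoverlap₁ k hne
    have o2 := G.hoverlap₂ k hne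
    rw [G.hs k] at o2
    rw [ha] at o1 o2 ⊢
    refine ⟨seg_core _ _ t (G.r k) _ ht (G.hr k) hm o1 o2 j (by omega) (by omega), ?_⟩
    have := seg_core _ _ t (G.r k) _ ht (G.hr k) hm o1 o2 (j + 1) (by omega) (by omega)
    rw [Nat.cast_succ, ← add_assoc] at this
    exact this
  | succ d ih =>
    refine ⟨ih j (by omega) (by omega), ?_, ?_⟩
    · have := ih (j + 1) (by omega) (by omega)
      rw [Nat.cast_succ, ← add_assoc] at this
      exact this
    · obtain ⟨j', rfl⟩ : ∃ j', j = j' + 1 := ⟨j - 1, by omega⟩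
      have := ih j' (by omega) (by omega)
      rw [Nat.cast_succ, ← add_assoc, add_sub_cancel_right]
      exact this

lemma geometry {t : ℕ} (G : CoarseGraining n t) (ht : 5 * t < n) (hm : 0 < t / 4)
    (d : ℕ) (hd : d < t / 4) (i : Fin n) (hi : ¬ deep G d i) :
    (∃ k, bondIn i (seg (G.s k) t)) ∨ ((∃ k, G.T k = ∅) ∧ i = ⟨n - 1, by omega⟩) := by
  obtain ⟨k, j, hj, rfl⟩ := cover G (by omega) i
  by_cases hjt : j + 1 < t
  · left
    refine ⟨k, ?_, ?_⟩
    · exact Finset.mem_image_of_mem _ (Finset.mem_range.mpr (by omega))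
    · rw [add_assoc, ← Nat.cast_succ]
      exact Finset.mem_image_of_mem (fun k : ℕ => G.s _ + (k : Fin n)) (Finset.mem_range.mpr hjt)
  · right
    by_cases hne : G.T k = ∅
    · refine ⟨⟨k, hne⟩, ?_⟩
      obtain ⟨hk, hs0, hsM⟩ := G.hTempty k hne
      have hkM : k = ⟨G.M - 1, Nat.sub_lt G.hMpos one_pos⟩ := Fin.ext hk
      rw [← hkM] at hsM
      have hcyc : cyc k = ⟨0, G.hMpos⟩ := by
        apply Fin.ext
        have hp := G.hMpos
        simp [cyc, hk, Nat.sub_add_cancel hp]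
      have hs := G.hs k
      rw [hcyc] at hs
      have h1 := congrArg Fin.val hs
      rw [hs0, Fin.val_add, Fin.val_natCast, Nat.add_mod_mod, ← add_assoc, hsM,
        Nat.add_mod_left] at h1
      have hr := G.hr k
      rw [Nat.mod_eq_of_lt (by omega)] at h1
      apply Fin.ext
      rw [Fin.val_add, Fin.val_natCast, Nat.add_mod_mod, Nat.mod_eq_of_lt (by omega)]
      simp only
      omega
    · exact absurd (deep_of_range G ht k hne hm d j (by omega) (by omega)) hi

end Geometry

/-! ### Part 6: assembly -/

namespace ChainSetup

variable {n : ℕ} [NeZero n]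

lemma Hbond_apply (C : ChainSetup n E) (i : Fin n) (v : E) :
    C.Hbond i v = ∑ j, C.P i j v := by simp [Hbond]

lemma Hbond_sym (C : ChainSetup n E) (i : Fin n) (x y : E) :
    inner ℂ (C.Hbond i x) y = inner ℂ x (C.Hbond i y) := by
  rw [Hbond_apply, Hbond_apply, sum_inner, inner_sum]
  exact Finset.sum_congr rfl fun j _ => (C.proj i j).sym x y

lemma Hbond_energy (C : ChainSetup n E) (i : Fin n) (v : E) :
    (inner ℂ v (C.Hbond i v)).re = ∑ j, ‖C.P i j v‖ ^ 2 := by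
  rw [Hbond_apply, inner_sum, Complex.re_sum]
  exact Finset.sum_congr rfl fun j _ => (C.proj i j).inner_self v

lemma Hsum_sym (C : ChainSetup n E) (F : Finset (Fin n)) (x y : E) :
    inner ℂ ((∑ i ∈ F, C.Hbond i) x) y = inner ℂ x ((∑ i ∈ F, C.Hbond i) y) := by
  rw [ContinuousLinearMap.sum_apply, ContinuousLinearMap.sum_apply, sum_inner, inner_sum]
  exact Finset.sum_congr rfl fun i _ => C.Hbond_sym i x y

lemma Hsum_energy (C : ChainSetup n E) (F : Finset (Fin n)) (v : E) :
    (inner ℂ v ((∑ i ∈ F, C.Hbond i) v)).re = ∑ i ∈ F, ∑ j, ‖C.P i j v‖ ^ 2 := by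
  rw [ContinuousLinearMap.sum_apply, inner_sum, Complex.re_sum]
  exact Finset.sum_congr rfl fun i _ => C.Hbond_energy i v

lemma Hsum_zero_iff (C : ChainSetup n E) (F : Finset (Fin n)) (v : E) :
    (∑ i ∈ F, C.Hbond i) v = 0 ↔ ∀ i ∈ F, ∀ j, C.P i j v = 0 := by
  constructor
  · intro h i hi j
    have h1 := C.Hsum_energy F v
    rw [h, inner_zero_right, Complex.zero_re] at h1
    have h2 := (Finset.sum_eq_zero_iff_of_nonneg
      (fun i _ => Finset.sum_nonneg fun j _ => by positivity)).mp h1.symm i hi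
    have h3 := (Finset.sum_eq_zero_iff_of_nonneg (fun j _ => by positivity)).mp h2 j
      (Finset.mem_univ j)
    simpa using h3
  · intro h
    rw [ContinuousLinearMap.sum_apply]
    refine Finset.sum_eq_zero fun i hi => ?_
    rw [Hbond_apply]
    exact Finset.sum_eq_zero fun j _ => h i hi j

lemma hamOn_zero_iff (C : ChainSetup n E) (F : Finset (Fin n)) (v : E) :
    C.hamOn F v = 0 ↔ ∀ i, bondIn i F → ∀ j, C.P i j v = 0 := by
  rw [hamOn, Hsum_zero_iff]; simp

lemma Qproj_eq (C : ChainSetup n E) (F : Finset (Fin n)) :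
    C.Qproj F = (LinearMap.ker (C.hamOn F : E →ₗ[ℂ] E))ᗮ.starProjection := rfl

lemma Qproj_isProjector (C : ChainSetup n E) (F : Finset (Fin n)) :
    IsProjector (C.Qproj F) := by
  rw [Qproj_eq]
  exact ⟨isSelfAdjoint_starProjection _, Submodule.isIdempotentElem_starProjection _⟩

lemma Qproj_zero_iff (C : ChainSetup n E) (F : Finset (Fin n)) (v : E) :
    C.Qproj F v = 0 ↔ ∀ i, bondIn i F → ∀ j, C.P i j v = 0 := by
  rw [← hamOn_zero_iff, Qproj_eq, Submodule.starProjection_apply_eq_zero_iff,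
    Submodule.orthogonal_orthogonal]
  simp

lemma Qproj_commute (C : ChainSetup n E) (F F' : Finset (Fin n)) (h : Disjoint F F') :
    Commute (C.Qproj F) (C.Qproj F') := by
  have h1 : Commute (C.hamOn F) (C.hamOn F') := by
    refine Commute.sum_left _ _ _ fun i hi => Commute.sum_right _ _ _ fun i' hi' => ?_
    refine Commute.sum_left _ _ _ fun j _ => Commute.sum_right _ _ _ fun j' _ => ?_
    apply C.locality
    simp only [Finset.mem_filter, Finset.mem_univ, true_and] at hi hi'
    refine Disjoint.mono ?_ ?_ h
    · intro x hx
      simp only [Finset.mem_insert, Finset.mem_singleton] at hx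
      rcases hx with rfl | rfl
      exacts [hi.1, hi.2]
    · intro x hx
      simp only [Finset.mem_insert, Finset.mem_singleton] at hx
      rcases hx with rfl | rfl
      exacts [hi'.1, hi'.2]
  have h2 : Commute (C.Qproj F) (C.hamOn F') := by
    rw [Qproj_eq]
    exact ker_proj_commute _ _ (C.Hsum_sym _) h1
  rw [C.Qproj_eq F']
  exact (ker_proj_commute _ _ (C.Qproj_isProjector F).sym h2.symm).symm

lemma coarseHam_apply (C : ChainSetup n E) {t : ℕ} (G : CoarseGraining n t) (v : E) :
    C.coarseHam t G v = ∑ k, (C.Qproj (seg (G.s k) t) v + C.Qproj (G.T k) v) := by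
  simp [coarseHam]

lemma coarseHam_sym (C : ChainSetup n E) {t : ℕ} (G : CoarseGraining n t) (x y : E) :
    inner ℂ (C.coarseHam t G x) y = inner ℂ x (C.coarseHam t G y) := by
  rw [coarseHam_apply, coarseHam_apply, sum_inner, inner_sum]
  refine Finset.sum_congr rfl fun k _ => ?_
  rw [inner_add_left, inner_add_right, (C.Qproj_isProjector _).sym, (C.Qproj_isProjector _).sym]

lemma coarseHam_energy (C : ChainSetup n E) {t : ℕ} (G : CoarseGraining n t) (v : E) :
    (inner ℂ v (C.coarseHam t G v)).re =
      ∑ k, ‖C.Qproj (seg (G.s k) t) v‖ ^ 2 + ∑ k, ‖C.Qproj (G.T k) v‖ ^ 2 := by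
  rw [coarseHam_apply, inner_sum, Complex.re_sum, ← Finset.sum_add_distrib]
  refine Finset.sum_congr rfl fun k _ => ?_
  rw [inner_add_right, Complex.add_re, (C.Qproj_isProjector _).inner_self,
    (C.Qproj_isProjector _).inner_self]

/-- projecting onto the joint kernel of a family of pairwise commuting projectors -/
lemma layer_proj {M : ℕ} (Q : Fin M → E →L[ℂ] E) (hQ : ∀ k, IsProjector (Q k))
    (hcomm : ∀ k l, Commute (Q k) (Q l)) (v : E) :
    ∃ x : E, (∀ k, Q k x = 0) ∧ (∀ u, (∀ k, Q k u = 0) → inner ℂ u x = inner ℂ u v) ∧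
      ‖v‖ ^ 2 - ‖x‖ ^ 2 ≤ ∑ k, ‖Q k v‖ ^ 2 := by
  obtain ⟨h1, h2, h3, -⟩ := commuting_projectors Q hQ hcomm (List.finRange M) v
  refine ⟨_, fun k => h2 k (List.mem_finRange k), fun u hu => h3 u fun k _ => hu k, ?_⟩
  rwa [← List.ofFn_eq_map, List.sum_ofFn] at h1

/-- the energy estimate for the coarse-grained Hamiltonian -/
lemma coarse_energy (C : ChainSetup n E)
    (t : ℕ) (ht2 : 5 * t < n) (ht4 : 0 < t / 4)
    (G : CoarseGraining n t)
    (hopen : (∃ k, G.T k = ∅) → C.Hbond ⟨n - 1, by omega⟩ = 0)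
    (hγ : 0 < C.gap) (hg : 0 < C.g) (q : ℕ) (hq : 2 * C.L * q ≤ t / 4)
    (v : E) (hv : ∀ u, (∀ i j, C.P i j u = 0) → inner ℂ u v = 0) :
    (1 - 1 / (1 + 2 * (q : ℝ) ^ 2 * (C.gap / (C.g : ℝ) ^ 2))) * ‖v‖ ^ 2 ≤
      (inner ℂ v (C.coarseHam t G v)).re := by
  classical
  set ε := C.gap / (C.g : ℝ) ^ 2 with hε
  have hg' : (0 : ℝ) < C.g := by exact_mod_cast hg
  have hεpos : 0 < ε := by positivity
  set δ := 1 / (1 + 2 * (q : ℝ) ^ 2 * ε) with hδ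
  have hδ0 : 0 ≤ δ := by positivity
  -- the family
  let ι := (i : Fin n) × Fin (C.m i)
  let P : ι → E →L[ℂ] E := fun p => C.P p.1 p.2
  have hP : ∀ p, IsProjector (P p) := fun p => C.proj p.1 p.2
  let LL : List (List ι) := (List.finRange C.L).map fun α =>
    (Finset.univ.filter fun p : ι => C.layer p = α).toList
  have hLLlen : LL.length = C.L := by simp [LL]
  have hLL : ∀ l ∈ LL, ∃ α, ∀ a ∈ l, C.layer a = α := by
    intro l hl
    simp only [LL, List.mem_map] at hl
    obtain ⟨α, -, rfl⟩ := hl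
    exact ⟨α, fun a ha => by simpa using ha⟩
  have hall : ∀ p, p ∈ LL.flatten := by
    intro p
    simp [LL]
  have hnodup : LL.flatten.Nodup := by
    rw [List.nodup_flatten]
    constructor
    · intro l hl
      simp only [LL, List.mem_map] at hl
      obtain ⟨α, -, rfl⟩ := hl
      exact Finset.nodup_toList _
    · simp only [LL]
      rw [List.pairwise_map]
      refine (List.nodup_finRange C.L).imp fun {α β} hαβ => ?_
      intro p hp hp'
      simp only [Finset.mem_toList, Finset.mem_filter, Finset.mem_univ, true_and] at hp hp'
      exact hαβ (hp.symm.trans hp')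
  set D := dl P LL.flatten with hD
  set A := dl P LL.flatten.reverse * dl P LL.flatten with hA
  have hAadj : ∀ x y, inner ℂ x (A y) = inner ℂ (D x) (D y) := by
    intro x y
    rw [hA, mul_apply_eq_comp, ← inner_conj_symm, dl_reverse P hP, inner_conj_symm]
  have hAsym : ∀ x y, inner ℂ (A x) y = inner ℂ x (A y) := by
    intro x y
    rw [← inner_conj_symm, hAadj, hAadj, inner_conj_symm]
  have hAnorm : ∀ x, (inner ℂ x (A x)).re = ‖D x‖ ^ 2 := by
    intro x
    rw [hAadj]
    exact inner_self_eq_norm_sq (𝕜 := ℂ) (D x)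
  -- the ground space
  let K : Submodule ℂ E := LinearMap.ker (C.Hfull : E →ₗ[ℂ] E)
  have memK : ∀ u, u ∈ K ↔ ∀ i j, C.P i j u = 0 := by
    intro u
    have := C.Hsum_zero_iff Finset.univ u
    simp only [K, LinearMap.mem_ker, ContinuousLinearMap.coe_coe]
    rw [Hfull, this]
    simp
  have hDfix : ∀ u ∈ K, ∀ l, dl P l u = u := fun u hu l =>
    dl_fix P l u fun p => (memK u).mp hu p.1 p.2
  have hAfix : ∀ u ∈ K, A u = u := by
    intro u hu
    rw [hA, mul_apply_eq_comp, hDfix u hu, hDfix u hu]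
  have hcard : ∀ p, (Finset.univ.filter fun q => ¬ Commute (P p) (P q)).card ≤ C.g := by
    intro p
    refine le_trans ?_ (C.gbound p)
    rw [Nat.card_eq_fintype_card, Fintype.card_subtype]
    refine Finset.card_le_card fun q hq => ?_
    simp only [Finset.mem_filter, Finset.mem_univ, true_and] at hq ⊢
    refine ⟨?_, hq⟩
    rintro rfl
    exact hq (Commute.refl _)
  -- the detectability lemma
  have hdetect : ∀ x, (∀ u ∈ K, inner ℂ u x = 0) →
      (inner ℂ x (A x)).re ≤ 1 / (1 + ε) * ‖x‖ ^ 2 := by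
    intro x hx
    rw [hAnorm]
    have h1 := dl_energy P hP C.g hcard LL.flatten hnodup hall x
    rw [← hD] at h1
    have h2 : C.gap * ‖D x‖ ^ 2 ≤ (inner ℂ (D x) (C.Hfull (D x))).re := by
      apply gap_le_inner C.Hfull (C.Hsum_sym Finset.univ)
      · intro y
        rw [Hfull, Hsum_energy]
        positivity
      · intro u hu
        have huK : u ∈ K := by simpa [K] using hu
        rw [hD, ← dl_reverse P hP, hDfix u huK]
        exact hx u huK
    rw [Hfull, Hsum_energy] at h2
    have h3 : ∑ i, ∑ j, ‖C.P i j (D x)‖ ^ 2 = ∑ p, ‖P p (D x)‖ ^ 2 := by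
      rw [Fintype.sum_sigma]
    rw [h3] at h2
    have h4 := h2.trans h1
    have h5 : C.gap = ε * (C.g : ℝ) ^ 2 := by rw [hε]; field_simp
    rw [h5] at h4
    have h6 : ε * ‖D x‖ ^ 2 ≤ ‖x‖ ^ 2 - ‖D x‖ ^ 2 := by
      have : (0 : ℝ) < (C.g : ℝ) ^ 2 := by positivity
      nlinarith
    rw [one_div, ← div_eq_inv_mul, le_div_iff₀ (by positivity)]
    linarith
  obtain ⟨p, hpdeg, hp1, hpb⟩ := cheb_poly ε hεpos q
  -- the two layers of coarse-grained projectors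
  obtain ⟨x, hx1, hx2, hx3⟩ := layer_proj (fun k => C.Qproj (seg (G.s k) t))
    (fun k => C.Qproj_isProjector _) (fun k l => by
      by_cases h : k = l
      · subst h; exact Commute.refl _
      · exact C.Qproj_commute _ _ (G.hSdisj k l h)) v
  obtain ⟨y, hy1, hy2, hy3⟩ := layer_proj (fun k => C.Qproj (G.T k))
    (fun k => C.Qproj_isProjector _) (fun k l => by
      by_cases h : k = l
      · subst h; exact Commute.refl _
      · exact C.Qproj_commute _ _ (G.hTdisj k l h)) v
  have hyK : ∀ u ∈ K, inner ℂ u y = 0 := by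
    intro u hu
    rw [memK] at hu
    rw [hy2 u fun k => (C.Qproj_zero_iff _ _).mpr fun i _ j => hu i j]
    exact hv u hu
  -- absorption
  let B : ℕ → ι → Prop := fun d p => deep G d p.1
  let KS : E → Prop := fun u => ∀ k, C.Qproj (seg (G.s k) t) u = 0
  have habs : ∀ k ≤ q, inner ℂ x ((A ^ k) y) = inner ℂ x y := by
    intro k hk
    have := absorb_pow P C.layer B KS y hP (fun d p h => h.1)
      (fun d p p' h h' => C.locality _ _ _ _ (deep_disjoint G d _ _ h h'))
      (fun p q h => C.layers p q h) (t / 4)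
      (by
        intro d hd p hp u hu
        rcases geometry G ht2 ht4 d hd p.1 hp with ⟨k, hk⟩ | ⟨hk, hi⟩
        · exact (C.Qproj_zero_iff _ _).mp (hu k) p.1 hk p.2
        · have h0 := hopen hk
          rw [← hi] at h0
          have := (C.Hsum_zero_iff {p.1} u).mp (by rw [Finset.sum_singleton, h0]; simp)
          exact this p.1 (by simp) p.2)
      LL hLL k
      (by
        rw [hLLlen]
        exact (Nat.mul_le_mul_left _ hk).trans hq)
      (by
        rintro p ⟨k, hk⟩
        exact (C.Qproj_zero_iff _ _).mp (hy1 k) p.1 hk p.2)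
    exact this.2 x hx1
  have hxy : ‖(inner ℂ x y : ℂ)‖ ≤ δ * (‖x‖ * ‖y‖) := by
    have h1 : inner ℂ x (∑ k ∈ Finset.range (q + 1), (p.coeff k : ℂ) • (A ^ k) y) =
        inner ℂ x y := by
      rw [inner_sum]
      have : ∀ k ∈ Finset.range (q + 1), inner ℂ x ((p.coeff k : ℂ) • (A ^ k) y) =
          (p.coeff k : ℂ) * inner ℂ x y := fun k hk => by
        rw [inner_smul_right, habs k (by simpa [Nat.lt_succ_iff] using hk)]
      rw [Finset.sum_congr rfl this, ← Finset.sum_mul]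
      rw [Polynomial.eval_eq_sum_range' (Nat.lt_succ_of_le hpdeg)] at hp1
      simp only [one_pow, mul_one] at hp1
      have h2 : ∑ k ∈ Finset.range (q + 1), (p.coeff k : ℂ) = 1 := by exact_mod_cast hp1
      rw [h2, one_mul]
    rw [← h1]
    refine (norm_inner_le_norm _ _).trans ?_
    have h3 := spec_poly A hAsym K hAfix (1 / (1 + ε))
      (by rw [div_lt_one (by positivity)]; linarith) (fun w => by rw [hAnorm]; positivity)
      hdetect p q hpdeg δ hδ0 hpb y hyK
    calc _ ≤ ‖x‖ * (δ * ‖y‖) := by gcongr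
      _ = _ := by ring
  have hxx : inner ℂ x v = ((‖x‖ ^ 2 : ℝ) : ℂ) := by
    rw [← hx2 x hx1, inner_self_eq_norm_sq_to_K]; norm_cast
  have hyy : inner ℂ y v = ((‖y‖ ^ 2 : ℝ) : ℂ) := by
    rw [← hy2 y hy1, inner_self_eq_norm_sq_to_K]; norm_cast
  have := two_layer v x y δ hxx hyy hδ0 hxy
  rw [coarseHam_energy]
  linarith

end ChainSetup

end Aux

/-- for a frustration-free chain Hamiltonian as in the setup with spectral
gap `γ ≤ g²/4`, noncommutation degree `g`, `L` layers, and coarse-grained Hamiltonian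
`H̄(t)` for a coarse-graining parameter `8L² < t < n/5`, one has
`γ(H̄(t)) ≥ t²γ/(400L²g² + 3t²γ)`. -/
theorem stmt_15 {n : ℕ} [NeZero n] (C : ChainSetup n E)
    (t : ℕ) (ht1 : 8 * C.L ^ 2 < t) (ht2 : 5 * t < n)
    (G : CoarseGraining n t)
    (hopen : (∃ k, G.T k = ∅) → C.Hbond ⟨n - 1, by omega⟩ = 0)
    (hγ : C.gap ≤ (C.g : ℝ) ^ 2 / 4) :
    (t : ℝ) ^ 2 * C.gap /
        (400 * (C.L : ℝ) ^ 2 * (C.g : ℝ) ^ 2 + 3 * (t : ℝ) ^ 2 * C.gap) ≤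
      minNonzeroEig (C.coarseHam t G) := by
  classical
  rcases (minNonzeroEig_nonneg C.Hfull).eq_or_lt with h0 | hpos
  · have : C.gap = 0 := h0.symm
    rw [this]
    simpa using minNonzeroEig_nonneg (C.coarseHam t G)
  have hgap : 0 < C.gap := hpos
  have hg : 0 < C.g := by
    rcases Nat.eq_zero_or_pos C.g with h | h
    · rw [h] at hγ; norm_num at hγ; linarith
    · exact h
  -- an excited state exists
  have hne : {c : ℝ | 0 < c ∧ ∃ v : E, v ≠ 0 ∧ C.Hfull v = (c : ℂ) • v}.Nonempty := by
    by_contra hcon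
    rw [Set.not_nonempty_iff_eq_empty] at hcon
    rw [minNonzeroEig, hcon, Real.sInf_empty] at hpos
    exact lt_irrefl _ hpos
  obtain ⟨c₀, hc₀, v₀, hv₀, hev₀⟩ := hne
  have hHK : ∀ u, (∀ i j, C.P i j u = 0) → C.Hfull u = 0 := fun u hu =>
    (C.Hsum_zero_iff Finset.univ u).mpr fun i _ j => hu i j
  have hL : 0 < C.L := by
    by_contra hL
    have hemp : IsEmpty ((i : Fin n) × Fin (C.m i)) := ⟨fun p => by
      have := (C.layer p).isLt
      omega⟩
    have := hHK v₀ fun i j => (hemp.false ⟨i, j⟩).elim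
    rw [this] at hev₀
    have := smul_eq_zero.mp hev₀.symm
    rcases this with h | h
    · have : c₀ = 0 := by exact_mod_cast h
      linarith
    · exact hv₀ h
  -- the degree of the Chebyshev polynomial
  set q := t / (8 * C.L) with hq
  have hL2 : C.L ≤ C.L ^ 2 := Nat.le_self_pow (by norm_num) _
  have hq1 : 1 ≤ q := (Nat.one_le_div_iff (by omega)).mpr (by omega)
  have hqle : 8 * C.L * q ≤ t := Nat.mul_div_le _ _
  have hqlt : t < 8 * C.L * (q + 1) := Nat.lt_mul_div_succ _ (by omega)
  have hq16 : t ≤ 16 * C.L * q := by nlinarith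
  have hq4 : 2 * C.L * q ≤ t / 4 := by
    rw [Nat.le_div_iff_mul_le (by norm_num)]
    linarith
  have ht4 : 0 < t / 4 := lt_of_lt_of_le (by positivity) hq4
  have key := C.coarse_energy t ht2 ht4 G hopen hgap hg q hq4
  set δ := 1 / (1 + 2 * (q : ℝ) ^ 2 * (C.gap / (C.g : ℝ) ^ 2)) with hδ
  have hgR : (0 : ℝ) < C.g := by exact_mod_cast hg
  have hLR : (0 : ℝ) < C.L := by exact_mod_cast hL
  have hqR : (0 : ℝ) < q := by exact_mod_cast hq1
  have hδlt : δ < 1 := by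
    rw [hδ, div_lt_one (by positivity)]
    have : 0 < 2 * (q : ℝ) ^ 2 * (C.gap / (C.g : ℝ) ^ 2) := by positivity
    linarith
  have hnum : (t : ℝ) ^ 2 * C.gap /
      (400 * (C.L : ℝ) ^ 2 * (C.g : ℝ) ^ 2 + 3 * (t : ℝ) ^ 2 * C.gap) ≤ 1 - δ := by
    have e : 1 - δ = 2 * (q : ℝ) ^ 2 * C.gap / ((C.g : ℝ) ^ 2 + 2 * (q : ℝ) ^ 2 * C.gap) := by
      rw [hδ]; field_simp; ring
    rw [e, div_le_div_iff₀ (by positivity) (by positivity)]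
    have ht : (t : ℝ) ≤ 16 * C.L * q := by exact_mod_cast hq16
    have hsq : (t : ℝ) ^ 2 ≤ (16 * C.L * q) ^ 2 := pow_le_pow_left₀ (by positivity) ht 2
    have h1 : (t : ℝ) ^ 2 * (C.gap * (C.g : ℝ) ^ 2) ≤
        (16 * C.L * q) ^ 2 * (C.gap * (C.g : ℝ) ^ 2) := by gcongr
    have h2 : 0 ≤ (C.L * q : ℝ) ^ 2 * (C.gap * (C.g : ℝ) ^ 2) := by positivity
    have h3 : 0 ≤ (q : ℝ) ^ 2 * (t : ℝ) ^ 2 * C.gap ^ 2 := by positivity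
    nlinarith
  refine hnum.trans ?_
  have hHsym := C.Hsum_sym (Finset.univ)
  have eig_perp : ∀ (A : E →L[ℂ] E), (∀ x y, inner ℂ (A x) y = inner ℂ x (A y)) →
      ∀ (c : ℝ) (v : E), 0 < c → A v = (c : ℂ) • v → ∀ u, A u = 0 → inner ℂ u v = 0 := by
    intro A hA c v hc hAv u hu
    have h := hA u v
    rw [hu, hAv, inner_zero_left, inner_smul_right] at h
    rcases mul_eq_zero.mp h.symm with h | h
    · have : c = 0 := by exact_mod_cast h
      linarith
    · exact h
  apply le_csInf
  · apply exists_pos_eig _ (C.coarseHam_sym G) v₀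
    have h1 := key v₀ fun u hu => eig_perp C.Hfull hHsym c₀ v₀ hc₀ hev₀ u (hHK u hu)
    have h2 : 0 < (1 - δ) * ‖v₀‖ ^ 2 := by
      have := norm_pos_iff.mpr hv₀
      have : 0 < 1 - δ := by linarith
      positivity
    linarith
  · rintro c ⟨hc, v, hv, hev⟩
    have h1 := key v fun u hu => eig_perp _ (C.coarseHam_sym G) c v hc hev u (by
      rw [C.coarseHam_apply]
      refine Finset.sum_eq_zero fun k _ => ?_
      rw [(C.Qproj_zero_iff _ _).mpr fun i _ j => hu i j,
        (C.Qproj_zero_iff _ _).mpr fun i _ j => hu i j, add_zero])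
    rw [hev, inner_smul_right, Complex.re_ofReal_mul] at h1
    have h2 : (inner ℂ v v).re = ‖v‖ ^ 2 := inner_self_eq_norm_sq (𝕜 := ℂ) v
    rw [h2] at h1
    have := norm_pos_iff.mpr hv
    exact le_of_mul_le_mul_right h1 (by positivity)
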